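/- Let q be a prime power, let k, t, n, m be positive integers with k ≤ n, t | n, 1 ≤ t ≤ n−1, and n | m, and let σ : x ↦ x^{q^s} with gcd(s,m)=1. Let β ∈ F_{q^m}^*, let α_1,…,α_n be an F_q-basis of βF_{q^n}, and let G = { (g(α_1),…,g(α_n)) : g(x) = Σ_{i=0}^{k−1} a_i x^{σ^i}, a_i ∈ F_{q^m} } ⊆ F_{q^m}^n be the evaluation of the generalized Gabidulin code; its minimum rank distance is d = n−k+1. If ⌊(d−1)/2⌋ + 1 ≤ t ≤ d−1, then there exists a word w ∈ F_{q^m}^n ∖ G such that |G ∩ B_t(w)| ≥ (q^n−1)/(q^t−1). -/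

import Mathlib

/-- Rank weight of a vector `v ∈ K^n` over `F_q`. -/
noncomputable def rkw (Fq : Type) [Field Fq] {K : Type} [Field K] [Algebra Fq K] {n : ℕ}
    (v : Fin n → K) : ℕ :=
  Module.finrank Fq ↥(Submodule.span Fq (Set.range v))

/-- Ball of radius `t` around `w` in the rank metric. -/
def ball (Fq : Type) [Field Fq] {K : Type} [Field K] [Algebra Fq K] {n : ℕ}
    (w : Fin n → K) (t : ℕ) : Set (Fin n → K) :=
  {c : Fin n → K | rkw Fq (w - c) ≤ t}

/-- Minimum rank distance of a code `C ⊆ K^n`. -/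
noncomputable def minDist (Fq : Type) [Field Fq] {K : Type} [Field K] [Algebra Fq K] {n : ℕ}
    (C : Set (Fin n → K)) : ℕ :=
  sInf {r : ℕ | ∃ u ∈ C, ∃ v ∈ C, u ≠ v ∧ rkw Fq (u - v) = r}

section SigmaPolynomials

variable {Fq K : Type} [Field Fq] [Field K] [Algebra Fq K]

/-- The `σ`-linearized polynomial with coefficients `a`, as an `Fq`-linear map. -/
def sigmaPoly (σ : K →ₐ[Fq] K) {k : ℕ} (a : Fin k → K) : K →ₗ[Fq] K :=
  ∑ i, a i • (σ ^ (i : ℕ)).toLinearMap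

theorem sigmaPoly_apply (σ : K →ₐ[Fq] K) {k : ℕ} (a : Fin k → K) (x : K) :
    sigmaPoly σ a x = ∑ i, a i * (σ ^ (i : ℕ)) x := by
  simp [sigmaPoly]

theorem sigmaPoly_sub (σ : K →ₐ[Fq] K) {k : ℕ} (a b : Fin k → K) :
    sigmaPoly σ (a - b) = sigmaPoly σ a - sigmaPoly σ b := by
  ext x
  simp [sigmaPoly_apply, sub_mul, Finset.sum_sub_distrib]

/-- The columns of a square Moore matrix of independent elements are independent. -/
theorem moore_columns_independent (σ : K →ₐ[Fq] K)
    (hσ : ∀ x, σ x = x → ∃ y, algebraMap Fq K y = x) {k : ℕ} (v c : Fin k → K)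
    (hv : LinearIndependent Fq v)
    (h : ∀ i : ℕ, i < k → ∑ j, c j * (σ ^ i) (v j) = 0) : c = 0 := by
  induction k with
  | zero => exact Subsingleton.elim _ _
  | succ k ih =>
    have hfirst : c 0 = 0 := by
      by_contra hc
      set e : Fin (k + 1) → K := fun j => c j / c 0 with he
      have he0 : e 0 = 1 := div_self hc
      have hsum : ∀ i, i < k + 1 → ∑ j, e j * (σ ^ i) (v j) = 0 := by
        intro i hi
        have := congrArg (fun z => z / c 0) (h i hi)
        simpa [Finset.sum_div, he, div_mul_eq_mul_div] using this
      have htail : (fun j : Fin k => e j.succ - σ (e j.succ)) = 0 := by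
        refine ih (fun j => σ (v j.succ)) _ ?_ ?_
        · have h1 : LinearIndependent Fq (fun j : Fin k => v j.succ) :=
            hv.comp _ (Fin.succ_injective k)
          exact h1.map' σ.toLinearMap (LinearMap.ker_eq_bot.2 σ.toRingHom.injective)
        · intro i hi
          have h1 := hsum (i + 1) (by omega)
          have h2 := congrArg σ (hsum i (by omega))
          simp only [map_sum, map_mul, map_zero, ← AlgHom.mul_apply, ← pow_succ'] at h2
          rw [Fin.sum_univ_succ] at h1 h2
          simp only [he0, map_one] at h1 h2
          simp only [← AlgHom.mul_apply, ← pow_succ, sub_mul, Finset.sum_sub_distrib]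
          linear_combination h1 - h2
      have hbase : ∀ j, ∃ y, algebraMap Fq K y = e j := by
        intro j
        refine hσ _ ?_
        refine Fin.cases (by rw [he0, map_one]) (fun j => ?_) j
        exact (sub_eq_zero.1 (congrFun htail j)).symm
      choose y hy using hbase
      have hzero := Fintype.linearIndependent_iff.1 hv y (by
        simpa [Algebra.smul_def, hy] using hsum 0 (by omega)) 0
      have := hy 0
      rw [hzero, he0, map_zero] at this
      exact zero_ne_one this
    have htail := ih (fun j => v j.succ) (fun j => c j.succ)
      (hv.comp _ (Fin.succ_injective k)) (fun i hi => by
        have := h i (by omega)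
        rwa [Fin.sum_univ_succ, hfirst, zero_mul, zero_add] at this)
    funext j
    exact Fin.cases hfirst (fun j => congrFun htail j) j

theorem sigmaPoly_coeff_eq_zero (σ : K →ₐ[Fq] K)
    (hσ : ∀ x, σ x = x → ∃ y, algebraMap Fq K y = x) {k : ℕ} (v a : Fin k → K)
    (hv : LinearIndependent Fq v) (h : ∀ j, sigmaPoly σ a (v j) = 0) : a = 0 := by
  by_contra ha
  let M : Matrix (Fin k) (Fin k) K := fun i j => (σ ^ (i : ℕ)) (v j)
  have hdet : M.det = 0 := Matrix.exists_vecMul_eq_zero_iff.1 ⟨a, ha, by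
    funext j
    simpa [Matrix.vecMul, dotProduct, M, sigmaPoly_apply] using h j⟩
  obtain ⟨c, hc, hMc⟩ := Matrix.exists_mulVec_eq_zero_iff.2 hdet
  refine hc (moore_columns_independent σ hσ v c hv fun i hi => ?_)
  have := congrFun hMc ⟨i, hi⟩
  simpa [Matrix.mulVec, dotProduct, M, mul_comm] using this

theorem le_rkw_sigmaPoly (σ : K →ₐ[Fq] K)
    (hσ : ∀ x, σ x = x → ∃ y, algebraMap Fq K y = x) {k n : ℕ} (a : Fin k → K)
    (ha : a ≠ 0) (α : Fin n → K) (hα : LinearIndependent Fq α) :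
    n + 1 ≤ rkw Fq (fun i => sigmaPoly σ a (α i)) + k := by
  set V := Submodule.span Fq (Set.range α) with hV
  have hdim : Module.finrank Fq V = n := by
    simpa using finrank_span_eq_card hα
  have : FiniteDimensional Fq V := FiniteDimensional.span_of_finite Fq (Set.finite_range α)
  have hrange : LinearMap.range ((sigmaPoly σ a).domRestrict V)
      = Submodule.span Fq (Set.range fun i => sigmaPoly σ a (α i)) := by
    rw [LinearMap.range_domRestrict, hV, Submodule.map_span, ← Set.range_comp]
    rfl
  have hnull := LinearMap.finrank_range_add_finrank_ker ((sigmaPoly σ a).domRestrict V)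
  rw [hrange, hdim] at hnull
  have hker : Module.finrank Fq (LinearMap.ker ((sigmaPoly σ a).domRestrict V)) < k := by
    by_contra! hle
    obtain ⟨u, hu⟩ := exists_linearIndependent_of_le_finrank hle
    refine ha (sigmaPoly_coeff_eq_zero σ hσ (fun j => ((u j : V) : K)) a ?_ fun j => ?_)
    · exact hu.map_injOn (V.subtype ∘ₗ Submodule.subtype _)
        (Subtype.val_injective.comp Subtype.val_injective).injOn
    · exact LinearMap.mem_ker.1 (u j).2
  unfold rkw
  omega

theorem rkw_le_of_zero_prefix {n r : ℕ} (v : Fin n → K)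
    (hv : ∀ j : Fin n, (j : ℕ) < r → v j = 0) :
    rkw Fq v ≤ n - r := by
  classical
  have hspan : Submodule.span Fq (Set.range v)
      ≤ Submodule.span Fq ((Finset.univ.filter fun j : Fin n => r ≤ (j : ℕ)).image v : Set K) := by
    rw [Submodule.span_le]
    rintro _ ⟨j, rfl⟩
    by_cases hj : (j : ℕ) < r
    · rw [hv j hj]
      exact Submodule.zero_mem _
    · exact Submodule.subset_span (by
        simp only [Finset.coe_image, Set.mem_image]
        exact ⟨j, by simpa using hj, rfl⟩)
  refine (Submodule.finrank_mono hspan).trans ((finrank_span_finset_le_card _).trans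
    (Finset.card_image_le.trans ?_))
  rw [← Fintype.card_subtype]
  have hinj : Function.Injective
      (fun j : {j : Fin n // r ≤ (j : ℕ)} => (⟨j.1 - r, by omega⟩ : Fin (n - r))) := by
    intro i j hij
    have := congrArg Fin.val hij
    ext
    dsimp at this
    omega
  simpa using Fintype.card_le_of_injective _ hinj

/-- The code of `σ`-linearized polynomials with `k` coefficients, evaluated at `α`. -/
def gabidulin (σ : K →ₐ[Fq] K) (k : ℕ) {n : ℕ} (α : Fin n → K) : Set (Fin n → K) :=
  {v | ∃ a : Fin k → K, v = fun i => sigmaPoly σ a (α i)}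

theorem minDist_gabidulin (σ : K →ₐ[Fq] K)
    (hσ : ∀ x, σ x = x → ∃ y, algebraMap Fq K y = x) {k n : ℕ} (hk : 0 < k) (hkn : k ≤ n)
    (α : Fin n → K) (hα : LinearIndependent Fq α) :
    minDist Fq (gabidulin σ k α) = n - k + 1 := by
  have hlower : ∀ a : Fin k → K, a ≠ 0 →
      n - k + 1 ≤ rkw Fq (fun i => sigmaPoly σ a (α i)) := fun a ha => by
    have := le_rkw_sigmaPoly σ hσ a ha α hα
    omega
  let L : (Fin k → K) →ₗ[K] (Fin (k - 1) → K) := LinearMap.pi fun j =>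
    ∑ i : Fin k, (σ ^ (i : ℕ)) (α ⟨j, by omega⟩) • LinearMap.proj i
  obtain ⟨a, haL, ha⟩ := (Submodule.ne_bot_iff _).1
    (LinearMap.ker_ne_bot_of_finrank_lt (f := L) (by simp; omega))
  have hupper : rkw Fq (fun i => sigmaPoly σ a (α i)) ≤ n - (k - 1) := by
    refine rkw_le_of_zero_prefix _ fun j hj => ?_
    have := congrFun (LinearMap.mem_ker.1 haL) ⟨j, hj⟩
    simpa [L, sigmaPoly_apply, mul_comm] using this
  have hmem : n - k + 1 ∈ {r : ℕ | ∃ u ∈ gabidulin σ k α, ∃ v ∈ gabidulin σ k α,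
      u ≠ v ∧ rkw Fq (u - v) = r} := by
    have heq : rkw Fq (fun i => sigmaPoly σ a (α i)) = n - k + 1 :=
      le_antisymm (by omega) (hlower a ha)
    refine ⟨_, ⟨a, rfl⟩, 0, ⟨0, by funext i; simp [sigmaPoly_apply]⟩, fun h => ?_, by
      rwa [sub_zero]⟩
    rw [h] at heq
    have : rkw Fq (0 : Fin n → K) ≤ n - n := rkw_le_of_zero_prefix _ (by simp)
    omega
  refine le_antisymm (Nat.sInf_le hmem) (le_csInf ⟨_, hmem⟩ ?_)
  rintro r ⟨_, ⟨a, rfl⟩, _, ⟨b, rfl⟩, hab, rfl⟩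
  have hsub : (fun i => sigmaPoly σ a (α i)) - (fun i => sigmaPoly σ b (α i))
      = fun i => sigmaPoly σ (a - b) (α i) := by
    funext i
    simp [sigmaPoly_sub]
  rw [hsub]
  refine hlower _ fun h => hab ?_
  rw [sub_eq_zero.1 h]

theorem sigmaPoly_extend (σ : K →ₐ[Fq] K) {k n : ℕ} (hkn : k ≤ n) (a : Fin n → K)
    (ha : ∀ j : Fin n, k ≤ (j : ℕ) → a j = 0) :
    sigmaPoly σ (fun i : Fin k => a (Fin.castLE hkn i)) = sigmaPoly σ a := by
  ext x
  obtain ⟨r, rfl⟩ := Nat.exists_eq_add_of_le hkn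
  rw [sigmaPoly_apply, sigmaPoly_apply, Fin.sum_univ_add, Finset.sum_eq_zero (s := Finset.univ)
    (f := fun i : Fin r => _), add_zero]
  · rfl
  · intro i _
    rw [ha _ (by simp), zero_mul]

theorem mem_gabidulin_iff (σ : K →ₐ[Fq] K)
    (hσ : ∀ x, σ x = x → ∃ y, algebraMap Fq K y = x) {k n : ℕ} (hkn : k ≤ n)
    (α : Fin n → K) (hα : LinearIndependent Fq α) (a : Fin n → K) :
    (fun i => sigmaPoly σ a (α i)) ∈ gabidulin σ k α ↔ ∀ j : Fin n, k ≤ (j : ℕ) → a j = 0 := by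
  constructor
  · rintro ⟨b, hb⟩ j hj
    let b' : Fin n → K := fun i => if h : (i : ℕ) < k then b ⟨i, h⟩ else 0
    have hext : sigmaPoly σ b = sigmaPoly σ b' := by
      rw [← sigmaPoly_extend σ hkn b' (fun i hi => dif_neg (by omega))]
      congr 1
      funext i
      simp [b']
    have h0 : a - b' = 0 := sigmaPoly_coeff_eq_zero σ hσ α _ hα fun i => by
      rw [sigmaPoly_sub, ← hext]
      exact sub_eq_zero.2 (congrFun hb i)
    rw [sub_eq_zero.1 h0]
    exact dif_neg (by omega)
  · intro h
    exact ⟨fun i => a (Fin.castLE hkn i), by rw [sigmaPoly_extend σ hkn a h]⟩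

theorem sum_ite_dvd_eq {M : Type*} [AddCommMonoid M] {t r : ℕ} (ht : 0 < t) (g : ℕ → M) :
    ∑ j : Fin (t * r), (if t ∣ (j : ℕ) then g j else 0) = ∑ i ∈ Finset.range r, g (t * i) := by
  rw [Fin.sum_univ_eq_sum_range (fun j => if t ∣ j then g j else 0), ← Finset.sum_filter]
  refine (Finset.sum_nbij (fun i => t * i) ?_ ?_ ?_ fun _ _ => rfl).symm
  · intro i hi
    simpa [ht] using hi
  · exact fun a _ b _ hab => Nat.eq_of_mul_eq_mul_left ht hab
  · intro j hj
    obtain ⟨hj, i, rfl⟩ := by simpa using hj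
    exact ⟨i, by simpa using lt_of_mul_lt_mul_left hj ht.le, rfl⟩

/-- The coefficients of the trace onto the fixed field of `σ ^ t`, precomposed with multiplication
by `u` and normalized to be monic. -/
def traceCoeff (σ : K →ₐ[Fq] K) (n t : ℕ) (u : K) (j : Fin n) : K :=
  if t ∣ (j : ℕ) then (σ ^ (j : ℕ)) u / (σ ^ (n - t)) u else 0

theorem sigmaPoly_traceCoeff (σ : K →ₐ[Fq] K) {t r : ℕ} (ht : 0 < t) (u x : K) :
    sigmaPoly σ (traceCoeff σ (t * r) t u) x
      = ((σ ^ (t * r - t)) u)⁻¹ * ∑ i ∈ Finset.range r, (σ ^ (t * i)) (u * x) := by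
  rw [sigmaPoly_apply, ← sum_ite_dvd_eq ht fun j => (σ ^ j) (u * x), Finset.mul_sum]
  refine Finset.sum_congr rfl fun j _ => ?_
  rw [traceCoeff]
  split_ifs
  · rw [map_mul]
    ring
  · simp

theorem sigma_trace_eq_self (σ : K →ₐ[Fq] K) (t r : ℕ) (z : K) (hz : (σ ^ (t * r)) z = z) :
    (σ ^ t) (∑ i ∈ Finset.range r, (σ ^ (t * i)) z) = ∑ i ∈ Finset.range r, (σ ^ (t * i)) z := by
  have h1 := Finset.sum_range_succ (fun i => (σ ^ (t * i)) z) r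
  rw [Finset.sum_range_succ'] at h1
  simp only [hz, mul_zero, pow_zero, AlgHom.one_apply] at h1
  rw [map_sum, ← add_right_cancel h1]
  refine Finset.sum_congr rfl fun i _ => ?_
  rw [← AlgHom.mul_apply, ← pow_add, Nat.mul_succ, add_comm]

end SigmaPolynomials

section Frobenius

variable {Fq K : Type} [Field Fq] [Fintype Fq] [Field K] [Algebra Fq K]

theorem pow_pow_gcd_eq_self {M : Type*} [Monoid M] {q a b : ℕ} {x : M} (ha : x ^ q ^ a = x)
    (hb : x ^ q ^ b = x) : x ^ q ^ a.gcd b = x := by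
  have ha' : Function.IsPeriodicPt (fun y : M => y ^ q) a x := by
    rw [Function.IsPeriodicPt, Function.IsFixedPt, pow_iterate]
    exact ha
  have hb' : Function.IsPeriodicPt (fun y : M => y ^ q) b x := by
    rw [Function.IsPeriodicPt, Function.IsFixedPt, pow_iterate]
    exact hb
  have := ha'.gcd hb'
  rwa [Function.IsPeriodicPt, Function.IsFixedPt, pow_iterate] at this

theorem card_filter_pow_eq_self_le [Fintype K] [DecidableEq K] {N : ℕ} (hN : 1 < N) :
    (Finset.univ.filter fun x : K => x ^ N = x).card ≤ N := by
  have hne := FiniteField.X_pow_card_sub_X_ne_zero K hN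
  refine le_trans ?_ ((Polynomial.card_roots' (Polynomial.X ^ N - Polynomial.X : Polynomial K)).trans
    (FiniteField.X_pow_card_sub_X_natDegree_eq K hN).le)
  refine le_trans (Finset.card_le_card fun x hx => ?_) (Multiset.toFinset_card_le _)
  rw [Multiset.mem_toFinset, Polynomial.mem_roots hne]
  simpa [sub_eq_zero] using hx

theorem frobeniusAlgHom_pow_apply (a : ℕ) (x : K) :
    ((FiniteField.frobeniusAlgHom Fq K) ^ a) x = x ^ Fintype.card Fq ^ a := by
  rw [AlgHom.coe_pow, FiniteField.coe_frobeniusAlgHom, pow_iterate]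

theorem exists_algebraMap_eq_of_pow_card_eq_self [Fintype K] (x : K) (hx : x ^ Fintype.card Fq = x) :
    ∃ y, algebraMap Fq K y = x := by
  classical
  have hsub : Finset.univ.image (algebraMap Fq K)
      ⊆ Finset.univ.filter fun x : K => x ^ Fintype.card Fq = x := by
    intro z hz
    obtain ⟨y, -, rfl⟩ := Finset.mem_image.1 hz
    simp [← map_pow, FiniteField.pow_card]
  have heq := Finset.eq_of_subset_of_card_le hsub (by
    rw [Finset.card_image_of_injective _ (algebraMap Fq K).injective, Finset.card_univ]
    exact card_filter_pow_eq_self_le Fintype.one_lt_card)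
  have hmem : x ∈ Finset.univ.image (algebraMap Fq K) := by
    rw [heq]
    simpa using hx
  simpa using hmem

theorem exists_algebraMap_eq_of_frobenius_pow_eq_self [Fintype K] {s : ℕ}
    (hs : s.gcd (Module.finrank Fq K) = 1) (x : K)
    (hx : (FiniteField.frobeniusAlgHom Fq K ^ s) x = x) : ∃ y, algebraMap Fq K y = x := by
  rw [frobeniusAlgHom_pow_apply] at hx
  have hcard : x ^ Fintype.card Fq ^ Module.finrank Fq K = x := by
    rw [← Module.card_eq_pow_finrank (K := Fq) (V := K), FiniteField.pow_card]
  have := pow_pow_gcd_eq_self hx hcard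
  rw [hs, pow_one] at this
  exact exists_algebraMap_eq_of_pow_card_eq_self x this

theorem rkw_le_of_mul_pow_eq_self [Fintype K] {n t : ℕ} (ht : 0 < t) (v : Fin n → K) (c : K)
    (z : Fin n → K) (hv : ∀ i, v i = c * z i) (hz : ∀ i, z i ^ Fintype.card Fq ^ t = z i) :
    rkw Fq v ≤ t := by
  classical
  have hq : 1 < Fintype.card Fq := Fintype.one_lt_card
  let E : Submodule Fq K := LinearMap.ker
    ((FiniteField.frobeniusAlgHom Fq K ^ t).toLinearMap - LinearMap.id)
  have hE : ∀ x, x ∈ E ↔ x ^ Fintype.card Fq ^ t = x := fun x => by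
    rw [LinearMap.mem_ker, LinearMap.sub_apply, sub_eq_zero, AlgHom.toLinearMap_apply,
      frobeniusAlgHom_pow_apply, LinearMap.id_apply]
  have hspan : Submodule.span Fq (Set.range v) ≤ E.map (LinearMap.mulLeft Fq c) := by
    rw [Submodule.span_le]
    rintro _ ⟨i, rfl⟩
    exact ⟨z i, (hE _).2 (hz i), (hv i).symm⟩
  refine (Submodule.finrank_mono hspan).trans ((Submodule.finrank_map_le _ _).trans ?_)
  refine (Nat.pow_le_pow_iff_right hq).1 ?_
  rw [← Module.card_eq_pow_finrank (K := Fq) (V := E), Fintype.card_of_subtype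
    (Finset.univ.filter fun x : K => x ^ Fintype.card Fq ^ t = x) (by simp [hE])]
  exact card_filter_pow_eq_self_le (Nat.one_lt_pow ht.ne' hq)

theorem exists_word_card_gabidulin_inter_ball [Fintype K] {s k t n : ℕ} (hs : s.gcd n = 1)
    (hσ : ∀ x, (FiniteField.frobeniusAlgHom Fq K ^ s) x = x → ∃ y, algebraMap Fq K y = x)
    (hkn : k ≤ n) (ht : 0 < t) (htn : t ∣ n) (hlt : t < n) (hlow : n < k + 2 * t)
    (hup : k + t ≤ n) (β : K) (hβ : β ≠ 0) (α : Fin n → K) (hα : LinearIndependent Fq α)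
    (hspan : (Submodule.span Fq (Set.range α) : Set K)
      = (fun y : K => β * y) '' {x : K | x ^ Fintype.card Fq ^ n = x}) :
    ∃ w : Fin n → K, w ∉ gabidulin (FiniteField.frobeniusAlgHom Fq K ^ s) k α ∧
      (Fintype.card Fq ^ n - 1) / (Fintype.card Fq ^ t - 1) ≤
        Nat.card ↥(gabidulin (FiniteField.frobeniusAlgHom Fq K ^ s) k α ∩ ball Fq w t) := by
  classical
  set q := Fintype.card Fq with hq
  set σ := FiniteField.frobeniusAlgHom Fq K ^ s with hσdef
  have hq1 : 1 < q := Fintype.one_lt_card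
  obtain ⟨r, rfl⟩ := htn
  have hr : 2 ≤ r := by
    by_contra! h
    have : t * r ≤ t * 1 := Nat.mul_le_mul_left t (by omega)
    omega
  have htr : 2 * t ≤ t * r := by
    rw [mul_comm]
    exact Nat.mul_le_mul_left t hr
  have hσpow : ∀ j x, (σ ^ j) x = x ^ q ^ (s * j) := fun j x => by
    rw [hσdef, ← pow_mul, frobeniusAlgHom_pow_apply]
  have hfix_n : ∀ x : K, x ^ q ^ (t * r) = x → (σ ^ (t * r)) x = x := fun x hx => by
    have hp : Function.IsPeriodicPt (fun y : K => y ^ q) (t * r) x := by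
      rw [Function.IsPeriodicPt, Function.IsFixedPt, pow_iterate]
      exact hx
    have := hp.const_mul s
    rw [Function.IsPeriodicPt, Function.IsFixedPt, pow_iterate] at this
    rw [hσpow]
    exact this
  have hfix_t : ∀ x : K, x ^ q ^ (t * r) = x → (σ ^ t) x = x → x ^ q ^ t = x :=
    fun x hx hx' => by
      rw [hσpow] at hx'
      have := pow_pow_gcd_eq_self hx' hx
      rwa [mul_comm s t, Nat.gcd_mul_left, Nat.Coprime.coprime_mul_left_right hs, mul_one] at this
  let top : Fin (t * r) := ⟨t * r - t, by omega⟩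
  let mono : Fin (t * r) → K := Pi.single top 1
  let w : Fin (t * r) → K := fun i => sigmaPoly σ mono (α i)
  let word : K → Fin (t * r) → K := fun γ i =>
    sigmaPoly σ (mono - traceCoeff σ (t * r) t (γ / β)) (α i)
  refine ⟨w, fun hw => ?_, ?_⟩
  · have := (mem_gabidulin_iff σ hσ hkn α hα mono).1 hw top (by simp only [top]; omega)
    simp [mono] at this
  let S : Finset K := (Finset.univ.filter fun x : K => x ^ q ^ (t * r) = x).erase 0
  have hS : ∀ γ ∈ S, γ ≠ 0 ∧ γ ^ q ^ (t * r) = γ := fun γ h => by simpa [S] using h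
  have hzero : ∀ a : ℕ, (0 : K) ∈ Finset.univ.filter fun x : K => x ^ q ^ a = x := fun a =>
    Finset.mem_filter.2 ⟨Finset.mem_univ _, zero_pow (by positivity)⟩
  have hcardS : S.card = q ^ (t * r) - 1 := by
    have hspan_card : ((Submodule.span Fq (Set.range α) : Set K)).ncard = q ^ (t * r) := by
      rw [← Nat.card_coe_set_eq]
      have := Module.card_eq_pow_finrank (K := Fq) (V := Submodule.span Fq (Set.range α))
      rw [finrank_span_eq_card hα, Fintype.card_fin] at this
      rw [← Fintype.card_eq_nat_card] at *
      exact this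
    rw [hspan, Set.ncard_image_of_injective _ (mul_right_injective₀ hβ)] at hspan_card
    rw [Finset.card_erase_of_mem (hzero _), ← Set.ncard_coe_finset,
      Finset.coe_filter_univ, hspan_card]
  have hsubfield : ∀ γ ∈ S, ∀ i, (γ / β * α i) ^ q ^ (t * r) = γ / β * α i := by
    intro γ hγ i
    have hmem : α i ∈ (Submodule.span Fq (Set.range α) : Set K) :=
      Submodule.subset_span ⟨i, rfl⟩
    rw [hspan] at hmem
    obtain ⟨y, hy, hyα⟩ := hmem
    have : γ / β * α i = γ * y := by
      rw [← hyα]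
      field_simp
    rw [this, mul_pow, (hS γ hγ).2, show y ^ q ^ (t * r) = y from hy]
  have hword_mem : ∀ γ ∈ S, word γ ∈ gabidulin σ k α ∩ ball Fq w t := by
    intro γ hγ
    have hu : ∀ j, (σ ^ j) (γ / β) ≠ 0 := fun j =>
      (map_ne_zero_iff _ (σ ^ j).toRingHom.injective).2 (div_ne_zero (hS γ hγ).1 hβ)
    refine ⟨(mem_gabidulin_iff σ hσ hkn α hα _).2 fun j hj => ?_, ?_⟩
    · rw [Pi.sub_apply, sub_eq_zero, traceCoeff]
      by_cases hjt : j = top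
      · subst hjt
        have hdvd : t ∣ t * r - t := Nat.dvd_sub (dvd_mul_right t r) dvd_rfl
        rw [if_pos hdvd, div_self (hu _), show mono top = 1 from Pi.single_eq_same _ _]
      · rw [if_neg]
        · simp [mono, hjt]
        · rintro ⟨i, hi⟩
          refine hjt (Fin.ext ?_)
          have h1 : t * i < t * r := hi ▸ j.2
          have h2 : i < r := lt_of_mul_lt_mul_left h1 ht.le
          have h3 : r < i + 2 := by
            refine lt_of_mul_lt_mul_left (a := t) ?_ ht.le
            rw [mul_add]
            omega
          have h4 : r = i + 1 := by omega
          simp only [top, hi, h4, mul_add]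
          omega
    · refine rkw_le_of_mul_pow_eq_self ht _ ((σ ^ (t * r - t)) (γ / β))⁻¹
        (fun i => ∑ j ∈ Finset.range r, (σ ^ (t * j)) (γ / β * α i)) (fun i => ?_) fun i => ?_
      · rw [← sigmaPoly_traceCoeff σ ht]
        simp [w, word, sigmaPoly_sub]
      · refine hfix_t _ ?_ (sigma_trace_eq_self σ t r _ (hfix_n _ (hsubfield γ hγ i)))
        rw [← frobeniusAlgHom_pow_apply, map_sum]
        refine Finset.sum_congr rfl fun j _ => ?_
        rw [frobeniusAlgHom_pow_apply, ← map_pow, hsubfield γ hγ i]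
  have hfiber : ∀ b ∈ S.image word, (S.filter fun γ => word γ = b).card ≤ q ^ t - 1 := by
    intro b hb
    obtain ⟨γ₀, hγ₀, rfl⟩ := Finset.mem_image.1 hb
    have hcard : ((Finset.univ.filter fun x : K => x ^ q ^ t = x).erase 0).card ≤ q ^ t - 1 := by
      rw [Finset.card_erase_of_mem (hzero _)]
      exact Nat.sub_le_sub_right (card_filter_pow_eq_self_le (Nat.one_lt_pow ht.ne' hq1)) 1
    refine le_trans (Finset.card_le_card_of_injOn (fun γ => γ / γ₀) ?_ ?_) hcard
    · intro γ hγ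
      obtain ⟨hγS, hγw⟩ := Finset.mem_filter.1 (Finset.mem_coe.1 hγ)
      have hcoeff := sigmaPoly_coeff_eq_zero σ hσ α
        ((mono - traceCoeff σ (t * r) t (γ / β)) - (mono - traceCoeff σ (t * r) t (γ₀ / β))) hα
        fun i => by
          rw [sigmaPoly_sub]
          exact sub_eq_zero.2 (congrFun hγw i)
      have hj := congrFun hcoeff ⟨t * r - 2 * t, by omega⟩
      have hdvd : t ∣ t * r - 2 * t := Nat.dvd_sub (dvd_mul_right t r) (dvd_mul_left t 2)
      simp only [Pi.sub_apply, sub_sub_sub_cancel_left, Pi.zero_apply, sub_eq_zero, traceCoeff,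
        if_pos hdvd] at hj
      have hexp : t * r - t = (t * r - 2 * t) + t := by omega
      have h0 := (hS γ hγS).1
      have h0' := (hS γ₀ hγ₀).1
      have hratio : (σ ^ t) (γ / γ₀) = γ / γ₀ := by
        apply (σ ^ (t * r - 2 * t)).toRingHom.injective
        change (σ ^ (t * r - 2 * t)) ((σ ^ t) (γ / γ₀)) = (σ ^ (t * r - 2 * t)) (γ / γ₀)
        rw [← AlgHom.mul_apply, ← pow_add, ← hexp]
        have hne : ∀ j (y : K), y ≠ 0 → (σ ^ j) y ≠ 0 := fun j y hy =>
          (map_ne_zero_iff _ (σ ^ j).toRingHom.injective).2 hy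
        simp only [map_div₀] at hj ⊢
        have h1 := hne (t * r - t) γ h0
        have h2 := hne (t * r - t) γ₀ h0'
        have h3 := hne (t * r - t) β hβ
        have h4 := hne (t * r - 2 * t) γ₀ h0'
        have h5 := hne (t * r - 2 * t) β hβ
        field_simp at hj ⊢
        linear_combination hj
      have hpow : (γ / γ₀) ^ q ^ (t * r) = γ / γ₀ := by
        rw [div_pow, (hS γ hγS).2, (hS γ₀ hγ₀).2]
      simpa [h0, h0'] using hfix_t _ hpow hratio
    · exact fun a _ b _ hab => (div_left_inj' (hS γ₀ hγ₀).1).1 hab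
  refine Nat.div_le_of_le_mul ?_
  rw [← hcardS, Nat.card_coe_set_eq]
  refine (Finset.card_le_mul_card_image S _ hfiber).trans (Nat.mul_le_mul_left _ ?_)
  rw [← Set.ncard_coe_finset]
  refine Set.ncard_le_ncard ?_ (Set.toFinite _)
  intro c hc
  obtain ⟨γ, hγ, rfl⟩ := Finset.mem_image.1 (Finset.mem_coe.1 hc)
  exact hword_mem γ hγ

end Frobenius

/-- the evaluation `G` of the generalized Gabidulin code `𝒢_{m,k,σ}` over an
`F_q`-basis of `βF_{q^n}` has minimum rank distance `d = n−k+1`, and for each `t ∣ n` with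
`⌊(d−1)/2⌋+1 ≤ t ≤ d−1` there is a word `w ∉ G` with `|G ∩ B_t(w)| ≥ (q^n−1)/(q^t−1)`. -/
theorem stmt_18 (q s k t n m : ℕ) (Fq K : Type) [Field Fq] [Fintype Fq] [Field K]
    [Fintype K] [Algebra Fq K]
    (hcard : Fintype.card Fq = q) (hfin : Module.finrank Fq K = m)
    (hn : 0 < n) (hnm : n ∣ m) (hs : Nat.gcd s m = 1)
    (hk : 0 < k) (hkn : k ≤ n)
    (ht0 : 0 < t) (htn : t ∣ n) (htn1 : t ≤ n - 1)
    (β : K) (hβ : β ≠ 0)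
    (α : Fin n → K) (hα : LinearIndependent Fq α)
    (hspan : (Submodule.span Fq (Set.range α) : Set K)
      = (fun y : K => β * y) '' {x : K | x ^ q ^ n = x})
    (G : Set (Fin n → K))
    (hG : G = (fun g : K → K => fun i : Fin n => g (α i)) ''
      {f : K → K | ∃ a : Fin k → K, ∀ x : K,
        f x = ∑ i : Fin k, a i * x ^ ((q ^ s) ^ (i : ℕ))})
    (d : ℕ) (hd : d = n - k + 1)
    (ht1 : (d - 1) / 2 + 1 ≤ t) (ht2 : (t : ℤ) ≤ (d : ℤ) - 1) :
    minDist Fq G = n - k + 1 ∧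
    ∃ w : Fin n → K, w ∉ G ∧
      (q ^ n - 1) / (q ^ t - 1) ≤ Nat.card ↥(G ∩ ball Fq w t) := by
  have hG' : G = gabidulin (FiniteField.frobeniusAlgHom Fq K ^ s) k α := by
    have hpoly : ∀ (a : Fin k → K) x, sigmaPoly (FiniteField.frobeniusAlgHom Fq K ^ s) a x
        = ∑ i : Fin k, a i * x ^ ((q ^ s) ^ (i : ℕ)) := fun a x => by
      simp only [sigmaPoly_apply, ← pow_mul, frobeniusAlgHom_pow_apply, hcard]
    rw [hG]
    ext v
    constructor
    · rintro ⟨f, ⟨a, ha⟩, rfl⟩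
      exact ⟨a, funext fun i => (ha _).trans (hpoly a _).symm⟩
    · rintro ⟨a, rfl⟩
      exact ⟨_, ⟨a, hpoly a⟩, rfl⟩
  have hσ := exists_algebraMap_eq_of_frobenius_pow_eq_self (Fq := Fq) (K := K) (hfin ▸ hs)
  subst hcard
  rw [hG']
  exact ⟨minDist_gabidulin _ hσ hk hkn α hα,
    exists_word_card_gabidulin_inter_ball (Nat.Coprime.coprime_dvd_right hnm hs) hσ hkn ht0 htn
      (by omega) (by omega) (by omega) β hβ α hα hspan⟩
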